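/- arXiv:1309.5865 — 2 statements merged into one kernel-verified Lean document; each statement's English description precedes it below -/
import Mathlib

section
/- The sequence I_n = ∫₀^∞ ∫₀^∞ ((1+x+y)(1+1/x+1/y))^{−n−1} dx dy/(xy) satisfies the Apéry-like recursion n² I_{n−1} − (3 + 10n + 10n²) I_n + 9(n+1)² I_{n+1} = 0 for all n ≥ 1. -/
open MeasureTheory Set

/-- The moments `I_n = ∫₀^∞∫₀^∞ ((1+x+y)(1+1/x+1/y))^{−n−1} dx dy/(xy)`. -/
noncomputable def sunsetMoment (n : ℕ) : ℝ :=
  ∫ p in (Ioi (0 : ℝ) ×ˢ Ioi (0 : ℝ)),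
    ((1 + p.1 + p.2) * (1 + 1/p.1 + 1/p.2)) ^ (-(n : ℤ) - 1) / (p.1 * p.2)

/-!
In the logarithmic coordinates `x = exp (2s + t)`, `y = exp (s + 2t)` the polynomial
`(1 + x + y)(1 + 1/x + 1/y)` factors as `q q̄`, where `q = exp s + exp t + exp (-(s + t))` is the
fundamental character of the root system `A₂` and `q̄ (s, t) = q (-s, -t)`, so `sunsetMoment n` is
`3 M(n+1, n+1)` with `M(a, b) = ∫ q^{-a} q̄^{-b} ds dt`. The total divergence of
`q^{-a-1} q̄^{-b} ∇q` (gradient for the invariant metric) integrates to zero, which gives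
`(2a + b) M(a, b) = 6 (a + 1) M(a + 2, b - 1) + 9 b M(a + 1, b + 1)`.
Together with the symmetry `M(a, b) = M(b, a)`, the instances `(r, r)`, `(r - 1, r + 2)` and
`(r + 1, r + 1)` are three linear relations; eliminating the off-diagonal moments from them leaves
the Apéry recursion.
-/

section General

open Module

variable {E : Type*} [NormedAddCommGroup E] [NormedSpace ℝ E]

lemma integrable_exp_neg_mul_norm [FiniteDimensional ℝ E] [MeasurableSpace E] [BorelSpace E]
    (μ : Measure E) [μ.IsAddHaarMeasure] {c : ℝ} (hc : 0 < c) :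
    Integrable (fun x => Real.exp (-c * ‖x‖)) μ := by
  rcases subsingleton_or_nontrivial E with hE | hE
  · exact (integrable_const 1).congr (.of_forall fun x => by simp [Subsingleton.elim x 0])
  · rw [integrable_fun_norm_addHaar μ (f := fun r => Real.exp (-c * r))]
    have h := integrableOn_rpow_mul_exp_neg_mul_rpow (p := 1) (s := ((finrank ℝ E - 1 : ℕ) : ℝ))
      (by linarith [Nat.cast_nonneg (α := ℝ) (finrank ℝ E - 1)]) one_pos hc
    simpa only [Real.rpow_natCast, Real.rpow_one, smul_eq_mul] using h

lemma integral_prod_eq_zero_of_hasDerivAt_left {β : Type*} [MeasurableSpace β] {ν : Measure β}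
    [SFinite ν] {f f' : ℝ → β → E} (hderiv : ∀ s t, HasDerivAt (f · t) (f' s t) s)
    (hf : Integrable (fun p : ℝ × β => f p.1 p.2) (volume.prod ν))
    (hf' : Integrable (fun p : ℝ × β => f' p.1 p.2) (volume.prod ν)) :
    ∫ p : ℝ × β, f' p.1 p.2 ∂volume.prod ν = 0 := by
  rw [integral_prod_symm _ hf']
  refine integral_eq_zero_of_ae ?_
  filter_upwards [hf.prod_left_ae, hf'.prod_left_ae] with t ht ht'
  exact integral_eq_zero_of_hasDerivAt_of_integrable (hderiv · t) ht' ht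

end General

/-- The fundamental character `q = e^s + e^t + e^{-(s+t)}` of the root system `A₂`, in coordinates
given by two of its three weights. The conjugate character `q̄` is `a2Char (-s) (-t)`. -/
noncomputable def a2Char (s t : ℝ) : ℝ := Real.exp s + Real.exp t + Real.exp (-(s + t))

lemma a2Char_pos (s t : ℝ) : 0 < a2Char s t := by
  unfold a2Char
  positivity

lemma a2Char_comm (s t : ℝ) : a2Char s t = a2Char t s := by
  rw [a2Char, a2Char, add_comm (Real.exp s), add_comm s]

@[fun_prop]
lemma continuous_a2Char {X : Type*} [TopologicalSpace X] {f g : X → ℝ} (hf : Continuous f)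
    (hg : Continuous g) : Continuous fun x => a2Char (f x) (g x) := by
  unfold a2Char
  fun_prop

lemma a2Char_neg_le_sq (s t : ℝ) : a2Char (-s) (-t) ≤ a2Char s t ^ 2 := by
  have hsq : a2Char s t ^ 2 = Real.exp s ^ 2 + Real.exp t ^ 2 + Real.exp (-(s + t)) ^ 2
      + 2 * a2Char (-s) (-t) := by
    simp only [a2Char, neg_add, neg_neg, Real.exp_add, Real.exp_neg]
    field_simp
    ring
  have hpos := a2Char_pos (-s) (-t)
  rw [hsq]
  linarith [sq_nonneg (Real.exp s), sq_nonneg (Real.exp t), sq_nonneg (Real.exp (-(s + t)))]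

lemma exp_half_norm_le_a2Char (p : ℝ × ℝ) : Real.exp (‖p‖ / 2) ≤ a2Char p.1 p.2 := by
  obtain ⟨s, t⟩ := p
  have hweight : ‖(s, t)‖ / 2 ≤ s ∨ ‖(s, t)‖ / 2 ≤ t ∨ ‖(s, t)‖ / 2 ≤ -(s + t) := by
    simp only [Prod.norm_def, Real.norm_eq_abs]
    grind
  have hs := Real.exp_pos s
  have ht := Real.exp_pos t
  have hst := Real.exp_pos (-(s + t))
  unfold a2Char
  rcases hweight with h | h | h <;> linarith [Real.exp_le_exp.2 h]

/-- The kernel `q^{-a} q̄^{-b}`. -/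
noncomputable def a2Kernel (a b s t : ℝ) : ℝ := a2Char s t ^ (-a) * a2Char (-s) (-t) ^ (-b)

lemma a2Kernel_pos (a b s t : ℝ) : 0 < a2Kernel a b s t :=
  mul_pos (Real.rpow_pos_of_pos (a2Char_pos _ _) _) (Real.rpow_pos_of_pos (a2Char_pos _ _) _)

lemma a2Kernel_comm (a b s t : ℝ) : a2Kernel a b t s = a2Kernel a b s t := by
  rw [a2Kernel, a2Kernel, a2Char_comm t, a2Char_comm (-t)]

lemma a2Kernel_neg (a b s t : ℝ) : a2Kernel a b (-s) (-t) = a2Kernel b a s t := by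
  rw [a2Kernel, a2Kernel, neg_neg, neg_neg, mul_comm]

lemma continuous_a2Kernel (a b : ℝ) : Continuous fun p : ℝ × ℝ => a2Kernel a b p.1 p.2 := by
  unfold a2Kernel
  exact (Continuous.rpow_const (by fun_prop) fun p => .inl (a2Char_pos _ _).ne').mul
    (Continuous.rpow_const (by fun_prop) fun p => .inl (a2Char_pos _ _).ne')

lemma a2Kernel_add (a b c d s t : ℝ) :
    a2Kernel (a + c) (b + d) s t = a2Kernel a b s t * a2Kernel c d s t := by
  simp only [a2Kernel, neg_add, Real.rpow_add (a2Char_pos _ _)]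
  exact mul_mul_mul_comm _ _ _ _

lemma a2Kernel_le_exp_neg_mul_norm {a b ε : ℝ} (hε : 0 ≤ ε) (ha : 3 * ε ≤ 2 * a + b)
    (hb : 3 * ε ≤ a + 2 * b) (p : ℝ × ℝ) : a2Kernel a b p.1 p.2 ≤ Real.exp (-ε * ‖p‖) := by
  set A := Real.log (a2Char p.1 p.2) with hA
  set B := Real.log (a2Char (-p.1) (-p.2)) with hB
  have hA_le : A ≤ 2 * B := by
    have h := Real.log_le_log (a2Char_pos _ _) (a2Char_neg_le_sq (-p.1) (-p.2))
    rwa [neg_neg, neg_neg, Real.log_pow] at h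
  have hB_le : B ≤ 2 * A := by
    have h := Real.log_le_log (a2Char_pos _ _) (a2Char_neg_le_sq p.1 p.2)
    rwa [Real.log_pow] at h
  have hnormA : ‖p‖ / 2 ≤ A :=
    (Real.le_log_iff_exp_le (a2Char_pos _ _)).2 (exp_half_norm_le_a2Char p)
  have hnormB : ‖p‖ / 2 ≤ B := by
    have h := (Real.le_log_iff_exp_le (a2Char_pos _ _)).2 (exp_half_norm_le_a2Char (-p))
    rwa [norm_neg] at h
  rw [a2Kernel, Real.rpow_def_of_pos (a2Char_pos _ _), Real.rpow_def_of_pos (a2Char_pos _ _),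
    ← Real.exp_add, Real.exp_le_exp, ← hA, ← hB]
  nlinarith [mul_nonneg (sub_nonneg.2 ha) (sub_nonneg.2 hB_le),
    mul_nonneg (sub_nonneg.2 hb) (sub_nonneg.2 hA_le)]

lemma integrable_a2Kernel {a b : ℝ} (ha : 0 < 2 * a + b) (hb : 0 < a + 2 * b) :
    Integrable fun p : ℝ × ℝ => a2Kernel a b p.1 p.2 := by
  have hε : 0 < min (2 * a + b) (a + 2 * b) / 3 := by positivity
  refine (integrable_exp_neg_mul_norm volume hε).mono'
    (continuous_a2Kernel a b).aestronglyMeasurable (.of_forall fun p => ?_)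
  rw [Real.norm_of_nonneg (a2Kernel_pos a b p.1 p.2).le]
  refine a2Kernel_le_exp_neg_mul_norm hε.le ?_ ?_ p
  · linarith [min_le_left (2 * a + b) (a + 2 * b)]
  · linarith [min_le_right (2 * a + b) (a + 2 * b)]

/-- The moment `M(a, b) = ∫ q^{-a} q̄^{-b}` over the plane, convergent when `2a + b` and `a + 2b`
are positive. -/
noncomputable def a2Moment (a b : ℝ) : ℝ := ∫ p : ℝ × ℝ, a2Kernel a b p.1 p.2

lemma a2Moment_comm (a b : ℝ) : a2Moment a b = a2Moment b a := by
  unfold a2Moment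
  rw [← integral_neg_eq_self]
  simp only [Prod.fst_neg, Prod.snd_neg, a2Kernel_neg]

/-- The proportion of `e^s` in `q`. -/
noncomputable def a2Weight (s t : ℝ) : ℝ := Real.exp s / a2Char s t

/-- The logarithmic derivative `∂_s log q`. The second term is the proportion of `e^{-(s+t)}`
in `q`, since `q` is symmetric in its three weights. -/
noncomputable def a2LogDeriv (s t : ℝ) : ℝ := a2Weight s t - a2Weight (-(s + t)) t

@[fun_prop]
lemma continuous_a2Weight {X : Type*} [TopologicalSpace X] {f g : X → ℝ} (hf : Continuous f)
    (hg : Continuous g) : Continuous fun x => a2Weight (f x) (g x) := by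
  unfold a2Weight
  exact Continuous.div (by fun_prop) (by fun_prop) fun x => (a2Char_pos _ _).ne'

@[fun_prop]
lemma continuous_a2LogDeriv {X : Type*} [TopologicalSpace X] {f g : X → ℝ} (hf : Continuous f)
    (hg : Continuous g) : Continuous fun x => a2LogDeriv (f x) (g x) := by
  unfold a2LogDeriv
  fun_prop

lemma a2Weight_mem_Icc (s t : ℝ) : a2Weight s t ∈ Icc 0 1 := by
  have hq := a2Char_pos s t
  refine ⟨div_nonneg (Real.exp_pos s).le hq.le, (div_le_one hq).2 ?_⟩
  unfold a2Char
  linarith [Real.exp_pos t, Real.exp_pos (-(s + t))]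

lemma abs_a2LogDeriv_le_one (s t : ℝ) : |a2LogDeriv s t| ≤ 1 := by
  obtain ⟨h₀, h₁⟩ := a2Weight_mem_Icc s t
  obtain ⟨h₀', h₁'⟩ := a2Weight_mem_Icc (-(s + t)) t
  rw [a2LogDeriv, abs_le]
  constructor <;> linarith

lemma a2Char_mul_a2LogDeriv (s t : ℝ) :
    a2Char s t * a2LogDeriv s t = Real.exp s - Real.exp (-(s + t)) := by
  have hperm : a2Char (-(s + t)) t = a2Char s t := by
    unfold a2Char
    ring_nf
  rw [a2LogDeriv, a2Weight, a2Weight, hperm, ← sub_div, mul_div_cancel₀ _ (a2Char_pos s t).ne']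

lemma hasDerivAt_a2Char (s t : ℝ) :
    HasDerivAt (a2Char · t) (a2Char s t * a2LogDeriv s t) s := by
  have h := ((Real.hasDerivAt_exp s).add_const (Real.exp t)).add
    ((hasDerivAt_id' s).add_const t).neg.exp
  refine h.congr_deriv ?_
  simp only [Pi.neg_apply, a2Char_mul_a2LogDeriv]
  ring

lemma hasDerivAt_a2Char_neg (s t : ℝ) :
    HasDerivAt (fun s => a2Char (-s) (-t)) (-(a2Char (-s) (-t) * a2LogDeriv (-s) (-t))) s :=
  ((hasDerivAt_a2Char (-s) (-t)).comp s (hasDerivAt_neg s)).congr_deriv (mul_neg_one _)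

lemma hasDerivAt_a2Weight (s t : ℝ) :
    HasDerivAt (a2Weight · t) (a2Weight s t * (1 - a2LogDeriv s t)) s := by
  have hq := (a2Char_pos s t).ne'
  refine ((Real.hasDerivAt_exp s).div (hasDerivAt_a2Char s t) hq).congr_deriv ?_
  unfold a2Weight
  field_simp

lemma hasDerivAt_a2Kernel (a b s t : ℝ) :
    HasDerivAt (a2Kernel a b · t)
      (a2Kernel a b s t * (b * a2LogDeriv (-s) (-t) - a * a2LogDeriv s t)) s := by
  have hq := a2Char_pos s t
  have hq' := a2Char_pos (-s) (-t)
  have h := ((hasDerivAt_a2Char s t).rpow_const (p := -a) (.inl hq.ne')).mul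
    ((hasDerivAt_a2Char_neg s t).rpow_const (p := -b) (.inl hq'.ne'))
  refine h.congr_deriv ?_
  rw [a2Kernel, Real.rpow_sub_one hq.ne', Real.rpow_sub_one hq'.ne']
  field_simp
  ring

/-- The `s`-component of the vector field `q^{-a-1} q̄^{-b} ∇q`, up to a constant factor. By the
symmetry of `q` and `q̄` its `t`-component is `a2Flux a b t s`. -/
noncomputable def a2Flux (a b s t : ℝ) : ℝ := a2Kernel a b s t * (1 - 3 * a2Weight s t)

/-- The quotient of `∂_s (a2Flux a b s t)` by the kernel `a2Kernel a b s t`. -/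
noncomputable def a2FluxFactor (a b s t : ℝ) : ℝ :=
  (b * a2LogDeriv (-s) (-t) - a * a2LogDeriv s t) * (1 - 3 * a2Weight s t)
    - 3 * a2Weight s t * (1 - a2LogDeriv s t)

lemma hasDerivAt_a2Flux (a b s t : ℝ) :
    HasDerivAt (a2Flux a b · t) (a2Kernel a b s t * a2FluxFactor a b s t) s := by
  refine ((hasDerivAt_a2Kernel a b s t).mul
    (((hasDerivAt_a2Weight s t).const_mul 3).const_sub 1)).congr_deriv ?_
  unfold a2FluxFactor
  ring

lemma abs_one_sub_three_mul_a2Weight_le (s t : ℝ) : |1 - 3 * a2Weight s t| ≤ 2 := by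
  obtain ⟨h₀, h₁⟩ := a2Weight_mem_Icc s t
  rw [abs_le]
  constructor <;> linarith

lemma abs_a2FluxFactor_le (a b s t : ℝ) : |a2FluxFactor a b s t| ≤ 2 * (|b| + |a|) + 6 := by
  obtain ⟨hw₀, hw₁⟩ := a2Weight_mem_Icc s t
  have hlog := abs_a2LogDeriv_le_one s t
  have hlog' := abs_a2LogDeriv_le_one (-s) (-t)
  have hkernel : |b * a2LogDeriv (-s) (-t) - a * a2LogDeriv s t| ≤ |b| * 1 + |a| * 1 := by
    refine (abs_sub _ _).trans ?_
    rw [abs_mul, abs_mul]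
    gcongr
  have hweight : |3 * a2Weight s t * (1 - a2LogDeriv s t)| ≤ 3 * 1 * (1 + 1) := by
    rw [abs_mul, abs_of_nonneg (by positivity)]
    gcongr
    exact (abs_sub _ _).trans (by rw [abs_one]; gcongr)
  calc |a2FluxFactor a b s t|
      ≤ |b * a2LogDeriv (-s) (-t) - a * a2LogDeriv s t| * |1 - 3 * a2Weight s t|
        + |3 * a2Weight s t * (1 - a2LogDeriv s t)| := by
        rw [← abs_mul]
        exact abs_sub _ _
    _ ≤ (|b| * 1 + |a| * 1) * 2 + 3 * 1 * (1 + 1) := by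
        gcongr
        exact abs_one_sub_three_mul_a2Weight_le s t
    _ = 2 * (|b| + |a|) + 6 := by ring

lemma a2FluxFactor_add_swap (a b s t : ℝ) :
    a2FluxFactor a b s t + a2FluxFactor a b t s
      = (2 * a + b) - 6 * (a + 1) * a2Kernel 2 (-1) s t - 9 * b * a2Kernel 1 1 s t := by
  have hq := a2Char_pos s t
  have hkernel : a2Kernel 2 (-1) s t = a2Char (-s) (-t) / a2Char s t ^ 2 := by
    rw [a2Kernel, neg_neg, Real.rpow_one, Real.rpow_neg hq.le, Real.rpow_two, inv_mul_eq_div]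
  have hkernel' : a2Kernel 1 1 s t = (a2Char s t * a2Char (-s) (-t))⁻¹ := by
    rw [a2Kernel, Real.rpow_neg_one, Real.rpow_neg_one, mul_inv]
  have hlog (s t : ℝ) : a2LogDeriv s t = (Real.exp s - Real.exp (-(s + t))) / a2Char s t := by
    rw [← a2Char_mul_a2LogDeriv, mul_div_cancel_left₀ _ (a2Char_pos s t).ne']
  rw [hkernel, hkernel']
  simp only [a2FluxFactor, hlog, a2Weight, a2Char_comm t s, a2Char_comm (-t) (-s)]
  simp only [a2Char, neg_add, neg_neg, Real.exp_add, Real.exp_neg]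
  field_simp
  ring

lemma integrable_a2Flux {a b : ℝ} (ha : 0 < 2 * a + b) (hb : 0 < a + 2 * b) :
    Integrable fun p : ℝ × ℝ => a2Flux a b p.1 p.2 :=
  (integrable_a2Kernel ha hb).mul_bdd (Continuous.aestronglyMeasurable (by fun_prop))
    (.of_forall fun p => abs_one_sub_three_mul_a2Weight_le p.1 p.2)

lemma integrable_a2Kernel_mul_a2FluxFactor {a b : ℝ} (ha : 0 < 2 * a + b) (hb : 0 < a + 2 * b) :
    Integrable fun p : ℝ × ℝ => a2Kernel a b p.1 p.2 * a2FluxFactor a b p.1 p.2 := by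
  refine (integrable_a2Kernel ha hb).mul_bdd (Continuous.aestronglyMeasurable ?_)
    (.of_forall fun p => abs_a2FluxFactor_le a b p.1 p.2)
  unfold a2FluxFactor
  fun_prop

lemma integral_a2Kernel_mul_a2FluxFactor {a b : ℝ} (ha : 0 < 2 * a + b) (hb : 0 < a + 2 * b) :
    ∫ p : ℝ × ℝ, a2Kernel a b p.1 p.2 * a2FluxFactor a b p.1 p.2 = 0 :=
  integral_prod_eq_zero_of_hasDerivAt_left (hasDerivAt_a2Flux a b) (integrable_a2Flux ha hb)
    (integrable_a2Kernel_mul_a2FluxFactor ha hb)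

lemma integral_a2Kernel_mul_a2FluxFactor_add_swap {a b : ℝ} (ha : 0 < 2 * a + b)
    (hb : 0 < a + 2 * b) :
    ∫ p : ℝ × ℝ, a2Kernel a b p.1 p.2 * (a2FluxFactor a b p.1 p.2 + a2FluxFactor a b p.2 p.1)
      = 0 := by
  have hint := integrable_a2Kernel_mul_a2FluxFactor ha hb
  have hzero := integral_a2Kernel_mul_a2FluxFactor ha hb
  have hint_swap : Integrable fun p : ℝ × ℝ => a2Kernel a b p.1 p.2 * a2FluxFactor a b p.2 p.1 :=
    hint.swap.congr (.of_forall fun p => congrArg (· * _) (a2Kernel_comm a b p.1 p.2))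
  have hzero_swap : ∫ p : ℝ × ℝ, a2Kernel a b p.1 p.2 * a2FluxFactor a b p.2 p.1 = 0 := by
    rw [Measure.volume_eq_prod, ← integral_prod_swap] at hzero
    simpa only [Prod.fst_swap, Prod.snd_swap, a2Kernel_comm a b, ← Measure.volume_eq_prod]
      using hzero
  simp only [mul_add]
  rw [integral_add hint hint_swap, hzero, hzero_swap, add_zero]

theorem a2Moment_recurrence {a b : ℝ} (ha : 0 < 2 * a + b) (hb : 0 < a + 2 * b) :
    (2 * a + b) * a2Moment a b
      = 6 * (a + 1) * a2Moment (a + 2) (b - 1) + 9 * b * a2Moment (a + 1) (b + 1) := by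
  have hdiv (p : ℝ × ℝ) :
      (2 * a + b) * a2Kernel a b p.1 p.2
        = a2Kernel a b p.1 p.2 * (a2FluxFactor a b p.1 p.2 + a2FluxFactor a b p.2 p.1)
          + (6 * (a + 1) * a2Kernel (a + 2) (b - 1) p.1 p.2
            + 9 * b * a2Kernel (a + 1) (b + 1) p.1 p.2) := by
    rw [a2FluxFactor_add_swap, sub_eq_add_neg b, a2Kernel_add, a2Kernel_add]
    ring
  have h₁ := (integrable_a2Kernel (a := a + 2) (b := b - 1) (by linarith)
    (by linarith)).const_mul (6 * (a + 1))
  have h₂ := (integrable_a2Kernel (a := a + 1) (b := b + 1) (by linarith)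
    (by linarith)).const_mul (9 * b)
  have hsum : Integrable fun p : ℝ × ℝ => 6 * (a + 1) * a2Kernel (a + 2) (b - 1) p.1 p.2
      + 9 * b * a2Kernel (a + 1) (b + 1) p.1 p.2 := h₁.add h₂
  have hflux : Integrable fun p : ℝ × ℝ =>
      a2Kernel a b p.1 p.2 * (a2FluxFactor a b p.1 p.2 + a2FluxFactor a b p.2 p.1) := by
    refine (((integrable_a2Kernel ha hb).const_mul (2 * a + b)).sub hsum).congr
      (.of_forall fun p => ?_)
    exact sub_eq_of_eq_add (hdiv p)
  simp only [a2Moment]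
  rw [← integral_const_mul, integral_congr_ae (.of_forall hdiv), integral_add hflux hsum,
    integral_a2Kernel_mul_a2FluxFactor_add_swap ha hb, zero_add, integral_add h₁ h₂,
    integral_const_mul, integral_const_mul]

lemma a2Moment_self {r : ℝ} (hr : 0 < r) :
    r * a2Moment r r
      = 2 * (r + 1) * a2Moment (r - 1) (r + 2) + 3 * r * a2Moment (r + 1) (r + 1) := by
  have h := a2Moment_recurrence (a := r) (b := r) (by linarith) (by linarith)
  rw [a2Moment_comm (r + 2)] at h
  linear_combination h / 3

lemma a2Moment_sub_one_add_two {r : ℝ} (hr : 0 < r) :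
    r * a2Moment (r - 1) (r + 2)
      = 2 * r * a2Moment (r + 1) (r + 1) + 3 * (r + 2) * a2Moment r (r + 3) := by
  have h := a2Moment_recurrence (a := r - 1) (b := r + 2) (by linarith) (by linarith)
  rw [show r - 1 + 2 = r + 1 by ring, show r + 2 - 1 = r + 1 by ring, sub_add_cancel,
    show r + 2 + 1 = r + 3 by ring] at h
  linear_combination h / 3

theorem sunsetMoment_apery_recursion_general {r : ℝ} (hr : 0 < r) :
    r ^ 2 * a2Moment r r - (3 + 10 * r + 10 * r ^ 2) * a2Moment (r + 1) (r + 1)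
      + 9 * (r + 1) ^ 2 * a2Moment (r + 2) (r + 2) = 0 := by
  have hself := a2Moment_self (r := r + 1) (by linarith)
  rw [add_sub_cancel_right, show r + 1 + 2 = r + 3 by ring, show r + 1 + 1 = r + 2 by ring]
    at hself
  linear_combination r * a2Moment_self hr + 2 * (r + 1) * a2Moment_sub_one_add_two hr
    - 3 * (r + 1) * hself

/-- The substitution `x = e^{2s+t}`, `y = e^{s+2t}`. -/
noncomputable def a2Coord (p : ℝ × ℝ) : ℝ × ℝ :=
  (Real.exp (2 * p.1 + p.2), Real.exp (p.1 + 2 * p.2))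

lemma injective_a2Coord : Function.Injective a2Coord := by
  rintro ⟨s, t⟩ ⟨s', t'⟩ h
  simp only [a2Coord, Prod.mk.injEq, Real.exp_eq_exp] at h ⊢
  constructor <;> linarith

lemma range_a2Coord : range a2Coord = Ioi 0 ×ˢ Ioi 0 := by
  refine Subset.antisymm
    (range_subset_iff.2 fun p => mk_mem_prod (Real.exp_pos _) (Real.exp_pos _)) ?_
  rintro ⟨x, y⟩ ⟨hx : 0 < x, hy : 0 < y⟩
  refine ⟨((2 * Real.log x - Real.log y) / 3, (2 * Real.log y - Real.log x) / 3),
    Prod.ext ?_ ?_⟩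
  · refine (congrArg Real.exp ?_).trans (Real.exp_log hx)
    ring
  · refine (congrArg Real.exp ?_).trans (Real.exp_log hy)
    ring

/-- The Jacobian of `a2Coord`. -/
noncomputable def fderivA2Coord (p : ℝ × ℝ) : ℝ × ℝ →L[ℝ] ℝ × ℝ :=
  (Matrix.toLin (.finTwoProd ℝ) (.finTwoProd ℝ)
    !![2 * (a2Coord p).1, (a2Coord p).1; (a2Coord p).2, 2 * (a2Coord p).2]).toContinuousLinearMap

lemma hasFDerivAt_a2Coord (p : ℝ × ℝ) : HasFDerivAt a2Coord (fderivA2Coord p) p := by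
  have hfst := hasFDerivAt_fst (𝕜 := ℝ) (p := p)
  have hsnd := hasFDerivAt_snd (𝕜 := ℝ) (p := p)
  rw [fderivA2Coord, Matrix.toLin_finTwoProd_toContinuousLinearMap]
  refine (HasFDerivAt.prodMk ((hfst.const_mul 2).add hsnd).exp
    (hfst.add (hsnd.const_mul 2)).exp).congr_fderiv ?_
  ext <;> simp [a2Coord, mul_comm]

lemma det_fderivA2Coord (p : ℝ × ℝ) :
    (fderivA2Coord p).det = 3 * ((a2Coord p).1 * (a2Coord p).2) := by
  rw [fderivA2Coord, LinearMap.det_toContinuousLinearMap, LinearMap.det_toLin,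
    Matrix.det_fin_two_of]
  ring

lemma one_add_mul_one_add_a2Coord (p : ℝ × ℝ) :
    (1 + (a2Coord p).1 + (a2Coord p).2) * (1 + 1 / (a2Coord p).1 + 1 / (a2Coord p).2)
      = a2Char p.1 p.2 * a2Char (-p.1) (-p.2) := by
  simp only [a2Coord, a2Char, two_mul, neg_add, neg_neg, Real.exp_add, Real.exp_neg]
  field_simp
  ring

lemma sunsetMoment_eq_a2Moment (n : ℕ) : sunsetMoment n = 3 * a2Moment (n + 1) (n + 1) := by
  rw [sunsetMoment, ← range_a2Coord, ← image_univ,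
    integral_image_eq_integral_abs_det_fderiv_smul volume .univ
      (fun p _ => (hasFDerivAt_a2Coord p).hasFDerivWithinAt) injective_a2Coord.injOn,
    setIntegral_univ, a2Moment, ← integral_const_mul]
  refine integral_congr_ae (.of_forall fun p => ?_)
  have hxy : 0 < (a2Coord p).1 * (a2Coord p).2 := mul_pos (Real.exp_pos _) (Real.exp_pos _)
  have hexp : -((n : ℝ) + 1) = ((-(n : ℤ) - 1 : ℤ) : ℝ) := by
    push_cast
    ring
  simp only [one_add_mul_one_add_a2Coord, det_fderivA2Coord, smul_eq_mul, a2Kernel, hexp,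
    Real.rpow_intCast, mul_zpow]
  rw [abs_of_pos (by positivity), mul_assoc, mul_div_cancel₀ _ hxy.ne']

theorem sunsetMoment_apery_recursion (n : ℕ) (hn : 1 ≤ n) :
    (n : ℝ) ^ 2 * sunsetMoment (n - 1)
      - (3 + 10 * n + 10 * n ^ 2) * sunsetMoment n
      + 9 * ((n : ℝ) + 1) ^ 2 * sunsetMoment (n + 1) = 0 := by
  have h := sunsetMoment_apery_recursion_general (r := n) (by exact_mod_cast hn)
  simp only [sunsetMoment_eq_a2Moment, Nat.cast_sub hn, Nat.cast_add, Nat.cast_one,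
    sub_add_cancel, add_assoc, one_add_one_eq_two]
  linear_combination 3 * h
end

section
/- For real x with 0 < |x| < 1, Σ_{n≥0} C(2n+3, 2n+1) ζ(2n+4) (−x)^{2n+1} = −1/(2x³) + (π³/2)·cos(πx)/sin(πx)³, where ζ is the Riemann zeta function and C(·,·) the binomial coefficient. -/
open Real

/-!
Expanding each pair of terms in the Mittag-Leffler series
`π cot (π z) = 1 / z + ∑ₖ (1 / (z - k) + 1 / (z + k))` as a geometric series gives
`∑ₙ ζ(2n + 2) z ^ (2n + 1) = (1 / z - π cot (π z)) / 2` on the punctured unit disc. Differentiating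
this power series twice produces the binomial coefficients, and `(cot z)'' = 2 cos z / sin z ^ 3`.
-/

lemma exists_mem_norm_lt_of_isOpen {E : Type*} [NormedAddCommGroup E] [NormedSpace ℝ E]
    [Nontrivial E] {U : Set E} (hU : IsOpen U) {z : E} (hz : z ∈ U) : ∃ w ∈ U, ‖z‖ < ‖w‖ := by
  by_contra! h
  have hUz : U ⊆ Metric.closedBall 0 ‖z‖ := fun w hw => mem_closedBall_zero_iff.mpr (h w hw)
  have hz' := interior_maximal hUz hU hz
  rw [interior_closedBall', mem_ball_zero_iff] at hz'
  exact hz'.false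

section PowerSeries

variable {ι : Type*} {a : ι → ℂ} {e : ι → ℕ} {f : ℂ → ℂ} {U : Set ℂ} {z : ℂ}

lemma hasSum_deriv_of_hasSum_mul_pow (hU : IsOpen U)
    (hf : ∀ w ∈ U, HasSum (fun i => a i * w ^ e i) (f w)) (hz : z ∈ U) :
    HasSum (fun i => a i * (e i * z ^ (e i - 1))) (deriv f z) := by
  obtain ⟨r, hrU, hzr⟩ := exists_mem_norm_lt_of_isOpen hU hz
  -- For holomorphic terms a summable bound on the terms themselves suffices.
  have hderiv := Complex.hasSum_deriv_of_summable_norm (F := fun i w => a i * w ^ e i)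
    (hf r hrU).summable.norm (fun i => by fun_prop) Metric.isOpen_ball
    (fun i w hw => by
      rw [norm_mul, norm_mul, norm_pow, norm_pow]
      gcongr
      exact (mem_ball_zero_iff.mp hw).le)
    (mem_ball_zero_iff.mpr hzr)
  have hf_eq : f =ᶠ[nhds z] fun w => ∑' i, a i * w ^ e i := by
    filter_upwards [hU.mem_nhds hz] with w hw using (hf w hw).tsum_eq.symm
  rw [hf_eq.deriv_eq]
  simpa using hderiv

lemma hasSum_iteratedDeriv_of_hasSum_mul_pow (hU : IsOpen U)
    (hf : ∀ w ∈ U, HasSum (fun i => a i * w ^ e i) (f w)) (k : ℕ) (hz : z ∈ U) :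
    HasSum (fun i => a i * (e i).descFactorial k * z ^ (e i - k)) (iteratedDeriv k f z) := by
  induction k generalizing z with
  | zero => simpa using hf z hz
  | succ k ih =>
    rw [iteratedDeriv_succ]
    convert! hasSum_deriv_of_hasSum_mul_pow hU (fun w hw => ih hw) hz using 2 with i
    rw [Nat.descFactorial_succ, Nat.sub_sub]
    push_cast
    ring

end PowerSeries

lemma riemannZeta_natCast_eq_tsum_succ {m : ℕ} (hm : 1 < m) :
    riemannZeta m = ∑' k : ℕ, 1 / ((k : ℂ) + 1) ^ m := by
  simpa using zeta_eq_tsum_one_div_nat_add_one_cpow (s := m) (by simpa using hm)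

lemma mem_integerComplement_of_norm_lt_one {z : ℂ} (h0 : z ≠ 0) (h1 : ‖z‖ < 1) :
    z ∈ Complex.integerComplement := by
  rintro ⟨n, rfl⟩
  rw [Complex.norm_intCast] at h1
  exact h0 (by exact_mod_cast Int.abs_lt_one_iff.mp (by exact_mod_cast h1))

lemma hasSum_odd_pow_div_even_pow {𝕜 : Type*} [NormedField 𝕜] {z c : 𝕜} (h : ‖z‖ < ‖c‖) :
    HasSum (fun n : ℕ => z ^ (2 * n + 1) / c ^ (2 * n + 2)) (z / (c ^ 2 - z ^ 2)) := by
  have hc_pos : 0 < ‖c‖ := (norm_nonneg z).trans_lt h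
  have hc : c ≠ 0 := norm_pos_iff.mp hc_pos
  have hratio : ‖(z / c) ^ 2‖ < 1 := by
    rw [norm_pow, norm_div]
    exact pow_lt_one₀ (by positivity) ((div_lt_one hc_pos).mpr h) two_ne_zero
  convert! (hasSum_geometric_of_norm_lt_one hratio).mul_left (z / c ^ 2) using 1
  · ext n
    rw [← pow_mul, div_pow]
    field
  · rw [← div_eq_mul_inv, div_div, div_pow, mul_one_sub, mul_div_cancel₀ _ (pow_ne_zero 2 hc)]

lemma norm_natCast_add_one (𝕜 : Type*) [RCLike 𝕜] (k : ℕ) : ‖(k : 𝕜) + 1‖ = k + 1 := by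
  exact_mod_cast RCLike.norm_natCast (K := 𝕜) (k + 1)

lemma summable_odd_pow_div_succ_even_pow {𝕜 : Type*} [RCLike 𝕜] {z : 𝕜} (hz : ‖z‖ < 1) :
    Summable (Function.uncurry fun n k : ℕ => z ^ (2 * n + 1) / ((k : 𝕜) + 1) ^ (2 * n + 2)) := by
  have hodd : Summable fun n : ℕ => ‖z‖ ^ (2 * n + 1) :=
    (summable_geometric_of_lt_one (norm_nonneg z) hz).comp_injective
      (i := fun n => 2 * n + 1) fun m n h => by simpa using h
  have hsq : Summable fun k : ℕ => 1 / ((k : ℝ) + 1) ^ 2 := by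
    simpa using (summable_nat_add_iff 1).mpr (Real.summable_one_div_nat_pow.mpr one_lt_two)
  refine .of_norm_bounded (hodd.mul_of_nonneg hsq (fun n => by positivity)
    fun k => by positivity) fun ⟨n, k⟩ => ?_
  rw [Function.uncurry_apply_pair, norm_div, norm_pow, norm_pow, norm_natCast_add_one,
    ← mul_one_div]
  gcongr
  · simp
  · lia

lemma hasSum_riemannZeta_even_mul_pow {z : ℂ} (h0 : z ≠ 0) (h1 : ‖z‖ < 1) :
    HasSum (fun n : ℕ => riemannZeta (2 * n + 2) * z ^ (2 * n + 1))
      ((1 / z - π * Complex.cot (π * z)) / 2) := by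
  have hz := mem_integerComplement_of_norm_lt_one h0 h1
  have hsum := summable_odd_pow_div_succ_even_pow h1
  have hterm (n : ℕ) : riemannZeta (2 * n + 2) * z ^ (2 * n + 1) =
      ∑' k : ℕ, z ^ (2 * n + 1) / ((k : ℂ) + 1) ^ (2 * n + 2) := by
    have hζ := riemannZeta_natCast_eq_tsum_succ (m := 2 * n + 2) (by lia)
    push_cast at hζ
    rw [hζ, ← tsum_mul_right]
    simp only [one_div_mul_eq_div]
  have hpole (k : ℕ) : ∑' n : ℕ, z ^ (2 * n + 1) / ((k : ℂ) + 1) ^ (2 * n + 2) =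
      -cotTerm z k / 2 := by
    have hk : ‖z‖ < ‖(k : ℂ) + 1‖ := by
      rw [norm_natCast_add_one]
      linarith [k.cast_nonneg (α := ℝ)]
    rw [(hasSum_odd_pow_div_even_pow hk).tsum_eq, cotTerm_identity hz, ← sq_sub_sq,
      ← neg_sub (z ^ 2), div_neg]
    ring
  simp only [hterm]
  convert! hsum.prod.hasSum using 1
  calc (1 / z - π * Complex.cot (π * z)) / 2
      = -(π * Complex.cot (π * z) - 1 / z) / 2 := by ring
    _ = ∑' k : ℕ, -cotTerm z k / 2 := by
        rw [cot_series_rep' hz, tsum_div_const, tsum_neg]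
    _ = ∑' k : ℕ, ∑' n : ℕ, z ^ (2 * n + 1) / ((k : ℂ) + 1) ^ (2 * n + 2) := by
        simp only [hpole]
    _ = ∑' n : ℕ, ∑' k : ℕ, z ^ (2 * n + 1) / ((k : ℂ) + 1) ^ (2 * n + 2) := hsum.tsum_comm

lemma hasDerivAt_cot {z : ℂ} (hz : Complex.sin z ≠ 0) :
    HasDerivAt Complex.cot (-1 / Complex.sin z ^ 2) z := by
  convert! (Complex.hasDerivAt_cos z).div (Complex.hasDerivAt_sin z) hz using 2
  linear_combination Complex.sin_sq_add_cos_sq z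

lemma hasDerivAt_neg_one_div_sin_sq {z : ℂ} (hz : Complex.sin z ≠ 0) :
    HasDerivAt (fun w => -1 / Complex.sin w ^ 2) (2 * Complex.cos z / Complex.sin z ^ 3) z := by
  convert! (hasDerivAt_const z (-1 : ℂ)).div ((Complex.hasDerivAt_sin z).pow 2)
    (pow_ne_zero 2 hz) using 1
  simp only [Pi.pow_apply]
  field

lemma iteratedDeriv_two_one_div_sub_mul_cot {z c : ℂ} (hz : z ≠ 0) (hs : Complex.sin (c * z) ≠ 0) :
    iteratedDeriv 2 (fun w => 1 / w - c * Complex.cot (c * w)) z =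
      2 / z ^ 3 - 2 * c ^ 3 * Complex.cos (c * z) / Complex.sin (c * z) ^ 3 := by
  have hmul (w : ℂ) : HasDerivAt (fun y => c * y) c w := by
    simpa using (hasDerivAt_id w).const_mul c
  have hfst : deriv (fun w => 1 / w - c * Complex.cot (c * w)) =ᶠ[nhds z]
      fun w => -(w ^ 2)⁻¹ - c * (-1 / Complex.sin (c * w) ^ 2 * c) := by
    have hs_near : ∀ᶠ w in nhds z, Complex.sin (c * w) ≠ 0 :=
      ContinuousAt.eventually_ne (by fun_prop) hs
    filter_upwards [eventually_ne_nhds hz, hs_near] with w hw hsw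
    simp only [one_div]
    exact ((hasDerivAt_inv hw).sub (((hasDerivAt_cot hsw).comp w (hmul w)).const_mul c)).deriv
  have hsnd := ((hasDerivAt_pow 2 z).inv (pow_ne_zero 2 hz)).neg.sub
    ((((hasDerivAt_neg_one_div_sin_sq hs).comp z (hmul z)).mul_const c).const_mul c)
  rw [iteratedDeriv_succ, iteratedDeriv_one, hfst.deriv_eq]
  convert! hsnd.deriv using 1
  field

theorem zeta_cotangent_like_series_general {z : ℂ} (h0 : z ≠ 0) (h1 : ‖z‖ < 1) :
    HasSum (fun n : ℕ => ((2 * n + 3).choose (2 * n + 1) : ℂ) * riemannZeta (2 * n + 4)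
        * (-z) ^ (2 * n + 1))
      (-1 / (2 * z ^ 3) + (π ^ 3 / 2) * Complex.cos (π * z) / Complex.sin (π * z) ^ 3) := by
  have hU : IsOpen (Metric.ball (0 : ℂ) 1 \ {0}) := Metric.isOpen_ball.sdiff isClosed_singleton
  have hderiv := hasSum_iteratedDeriv_of_hasSum_mul_pow hU
    (fun w hw => hasSum_riemannZeta_even_mul_pow hw.2 (mem_ball_zero_iff.mp hw.1)) 2
    ⟨mem_ball_zero_iff.mpr h1, h0⟩
  rw [iteratedDeriv_div_const, iteratedDeriv_two_one_div_sub_mul_cot h0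
    (sin_pi_mul_ne_zero (mem_integerComplement_of_norm_lt_one h0 h1)),
    ← hasSum_nat_add_iff' 1] at hderiv
  convert! hderiv.div_const (-2) using 1
  · ext n
    have hζ : (2 * (n + 1 : ℕ) + 2 : ℂ) = 2 * n + 4 := by push_cast; ring
    rw [hζ, show 2 * (n + 1) + 1 = 2 * n + 1 + 2 by ring, Nat.add_sub_cancel,
      Nat.descFactorial_eq_factorial_mul_choose, ← Nat.choose_symm_add, Odd.neg_pow ⟨n, rfl⟩]
    push_cast [Nat.factorial_two]
    ring
  · rw [Finset.sum_range_one, mul_zero, zero_add, Nat.descFactorial_of_lt one_lt_two]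
    ring

theorem zeta_cotangent_like_series (x : ℝ) (h0 : x ≠ 0) (h1 : |x| < 1) :
    ∑' n : ℕ, ((2 * n + 3).choose (2 * n + 1) : ℝ)
        * (∑' k : ℕ, (1 : ℝ) / ((k : ℝ) + 1) ^ (2 * n + 4))
        * (-x) ^ (2 * n + 1)
      = -1 / (2 * x ^ 3) + (π ^ 3 / 2) * Real.cos (π * x) / Real.sin (π * x) ^ 3 := by
  have hζ (n : ℕ) := riemannZeta_natCast_eq_tsum_succ (m := 2 * n + 4) (by lia)
  push_cast at hζ
  apply Complex.ofReal_injective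
  push_cast
  simp only [← hζ]
  exact (zeta_cotangent_like_series_general (Complex.ofReal_ne_zero.mpr h0)
    (by simpa using h1)).tsum_eq
end
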